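/- Let k ≥ 1 and let α be a partition of ℓ ≥ 0. The number of pairs (T, π), where T is a partial standard tableau of shape α with labels in {1, …, k} and π is a permutation of {1, …, k} such that every non-trivial cycle of π is decreasing, every fixed point of π is a label of a cell of T, and every label of T is the greatest element of its cycle in π, equals f^{α} · Σ_{m₁=0}^{ℓ} [ C(k, m₁) · Σ_{m₂ = ℓ − m₁}^{⌊(k − m₁)/2⌋} C(m₂, ℓ − m₁) · p₂(k − m₁, m₂) ], where C(a,b) denotes a binomial coefficient. -/

import Mathlib

open Finset

namespace KroneckerPaper

/-- A (removable) corner of a Young diagram: a cell with no cell below it nor to its right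
(in English notation; equivalently, in French notation, a cell at the right end of its row
with no cell above it). -/
def IsCorner (μ : YoungDiagram) (c : ℕ × ℕ) : Prop :=
  c ∈ μ ∧ (c.1 + 1, c.2) ∉ μ ∧ (c.1, c.2 + 1) ∉ μ

/-- The *first corner* of a Young diagram: the unique corner lying on a row of maximal
length. -/
def IsFirstCorner (μ : YoungDiagram) (c : ℕ × ℕ) : Prop :=
  IsCorner μ c ∧ μ.rowLen c.1 = μ.rowLen 0

/-- `μ'` is obtained from `μ` by adding one new cell which is a corner of `μ'`. -/
def AddCorner (μ μ' : YoungDiagram) : Prop :=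
  ∃ c, IsCorner μ' c ∧ c ∉ μ.cells ∧ μ'.cells = insert c μ.cells

/-- `μ'` is obtained from `μ` by removing one corner of `μ`. -/
def RemoveCorner (μ μ' : YoungDiagram) : Prop :=
  ∃ c, IsCorner μ c ∧ μ'.cells = μ.cells.erase c

/-- `μ' ≠ μ` *differs from `μ` by the position of a corner*: it is obtained from `μ` by
removing a corner of `μ` and adding a new cell which is a corner of `μ'`. -/
def MoveCorner (μ μ' : YoungDiagram) : Prop :=
  μ' ≠ μ ∧ ∃ c c', IsCorner μ c ∧ IsCorner μ' c' ∧ c' ∉ μ.cells.erase c ∧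
    μ'.cells = insert c' (μ.cells.erase c)

/-- The one-row Young diagram `(n)`. -/
def rowDiagram (n : ℕ) : YoungDiagram :=
  YoungDiagram.ofRowLens [n] (List.pairwise_singleton _ n).sortedGE

/-- The Young diagram obtained by deleting the first (longest) row, i.e. the truncated
partition `λ̄ = (λ₂, …, λ_m)` of `λ = (λ₁, λ₂, …, λ_m)`. -/
def truncate (μ : YoungDiagram) : YoungDiagram where
  cells := (μ.cells.filter fun c => 1 ≤ c.1).image fun c => (c.1 - 1, c.2)
  isLowerSet := by
    rintro ⟨i1, j1⟩ ⟨i2, j2⟩ ⟨hi, hj⟩ h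
    simp only [Finset.coe_image, Finset.coe_filter, Set.mem_image, Set.mem_setOf_eq,
      Finset.mem_coe, YoungDiagram.mem_cells] at h ⊢
    obtain ⟨⟨a, b⟩, ⟨ha, ha1⟩, heq⟩ := h
    simp only [Prod.mk.injEq] at heq
    exact ⟨(i2 + 1, j2), ⟨μ.up_left_mem (by omega) (by omega) ha, by omega⟩, by simp⟩

/-- A *Kronecker tableau* of length `k`, initial shape `μ` and final shape `lam`:
a sequence `μ⁰ = μ, μ¹, …, μ^k = lam` of diagrams such that each `μ^{i+1}` either differs
from `μ^i` by the position of a corner, or equals `μ^i` together with the datum of a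
distinguished corner of `μ^{i+1}` other than its first corner. -/
structure KroneckerTableau (k : ℕ) (μ lam : YoungDiagram) where
  seq : Fin (k + 1) → YoungDiagram
  dist : Fin k → Option (ℕ × ℕ)
  init : seq 0 = μ
  final : seq (Fin.last k) = lam
  step : ∀ i : Fin k,
    (MoveCorner (seq i.castSucc) (seq i.succ) ∧ dist i = none) ∨
    (seq i.succ = seq i.castSucc ∧
      ∃ c, dist i = some c ∧ IsCorner (seq i.succ) c ∧ ¬ IsFirstCorner (seq i.succ) c)

/-- A *partial standard tableau* of shape `α` with labels in `{1, …, k}`: a labelling of the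
cells of `α` by pairwise distinct integers of `{1, …, k}` increasing along rows and columns
(cells outside `α` are labelled `0` by convention). -/
structure PartialST (α : YoungDiagram) (k : ℕ) where
  label : ℕ × ℕ → ℕ
  mem_of_cell : ∀ c ∈ α, label c ∈ Finset.Icc 1 k
  zero_of_not_cell : ∀ c, c ∉ α → label c = 0
  injOn : ∀ c ∈ α, ∀ c' ∈ α, label c = label c' → c = c'
  row_incr : ∀ i j1 j2 : ℕ, j1 < j2 → (i, j2) ∈ α → label (i, j1) < label (i, j2)
  col_incr : ∀ i1 i2 j : ℕ, i1 < i2 → (i2, j) ∈ α → label (i1, j) < label (i2, j)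

/-- `f^α`, the number of standard Young tableaux of shape `α`. -/
noncomputable def fSYT (α : YoungDiagram) : ℕ :=
  Nat.card (PartialST α α.card)

/-- `p₂ n k`: the number of partitions of an `n`-element set into exactly `k` blocks, each of
size at least `2` (associated Stirling numbers of the second kind). -/
noncomputable def p2 (n k : ℕ) : ℕ :=
  Nat.card {P : Finpartition (Finset.univ : Finset (Fin n)) //
    P.parts.card = k ∧ ∀ b ∈ P.parts, 2 ≤ b.card}

/-- Every non-trivial cycle of `π` is *decreasing*: `π x < x` for every element `x` of a
non-trivial cycle which is not the minimum of its cycle. -/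
def DecCycles {S : Type*} [LinearOrder S] (π : Equiv.Perm S) : Prop :=
  ∀ x, π x ≠ x → (∃ y, π.SameCycle x y ∧ y < x) → π x < x

/-- A pair `(T, π)` of a partial standard tableau of shape `α` with labels in `{1, …, k}`
and a permutation `π` of `{1, …, k}` all of whose non-trivial cycles are decreasing, such
that every fixed point of `π` is a label of `T` and every label of `T` is the greatest
element of its cycle in `π`. -/
structure TabPerm (k : ℕ) (α : YoungDiagram) where
  T : PartialST α k
  π : Equiv.Perm ℕ
  perm_of : ∀ x : ℕ, x ∉ Finset.Icc 1 k → π x = x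
  dec : DecCycles π
  fix_mem : ∀ x ∈ Finset.Icc 1 k, π x = x → ∃ c ∈ α, T.label c = x
  label_max : ∀ c ∈ α, ∀ y : ℕ, π.SameCycle (T.label c) y → y ≤ T.label c


/-! ### Decreasing permutations and equivalence relations -/

/-- `r` only relates distinct elements inside `{1, …, k}`. -/
def Dom (k : ℕ) (r : Setoid ℕ) : Prop := ∀ x y, r x y → x ≠ y → x ∈ Finset.Icc 1 k

/-- `y` is the cyclic predecessor of `x` in its class. -/
def CPred (r : Setoid ℕ) (x y : ℕ) : Prop :=
  r x y ∧ ((y < x ∧ ∀ z, r x z → z < x → z ≤ y) ∨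
    ((∀ z, r x z → x ≤ z) ∧ (∀ z, r x z → z ≤ y)))

lemma exists_max_of_bdd (p : ℕ → Prop) (B : ℕ) (h : ∀ z, p z → z ≤ B) (hne : ∃ z, p z) :
    ∃ y, p y ∧ ∀ z, p z → z ≤ y := by
  classical
  obtain ⟨z, hz⟩ := hne
  exact ⟨Nat.findGreatest p B, Nat.findGreatest_spec (h z hz) hz,
    fun w hw => Nat.le_findGreatest (h w hw) hw⟩

lemma exists_min_nat (p : ℕ → Prop) (hne : ∃ z, p z) :
    ∃ y, p y ∧ ∀ z, p z → y ≤ z := by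
  classical
  exact ⟨Nat.find hne, Nat.find_spec hne, fun w hw => Nat.find_min' hne hw⟩

lemma Dom.bdd {k : ℕ} {r : Setoid ℕ} (h : Dom k r) {x y : ℕ} (hxy : r x y) : y ≤ x + k := by
  by_cases e : y = x
  · omega
  · have := h y x (r.symm hxy) e
    simp at this; omega

lemma CPred.exists_right {k : ℕ} {r : Setoid ℕ} (h : Dom k r) (x : ℕ) : ∃ y, CPred r x y := by
  by_cases hx : ∃ z, r x z ∧ z < x
  · obtain ⟨y, ⟨h1, h2⟩, h3⟩ := exists_max_of_bdd (fun z => r x z ∧ z < x) x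
      (fun z hz => hz.2.le) hx
    exact ⟨y, h1, Or.inl ⟨h2, fun z hz hz' => h3 z ⟨hz, hz'⟩⟩⟩
  · obtain ⟨y, h1, h3⟩ := exists_max_of_bdd (fun z => r x z) (x + k)
      (fun z hz => h.bdd hz) ⟨x, r.refl x⟩
    push Not at hx
    exact ⟨y, h1, Or.inr ⟨hx, h3⟩⟩

lemma CPred.exists_left (r : Setoid ℕ) (y : ℕ) : ∃ x, CPred r x y := by
  by_cases hx : ∃ z, r y z ∧ y < z
  · obtain ⟨x, ⟨h1, h2⟩, h3⟩ := exists_min_nat (fun z => r y z ∧ y < z) hx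
    refine ⟨x, r.symm h1, Or.inl ⟨h2, fun z hz hz' => ?_⟩⟩
    by_contra hc
    have := h3 z ⟨r.trans h1 hz, by omega⟩
    omega
  · obtain ⟨x, h1, h3⟩ := exists_min_nat (fun z => r y z) ⟨y, r.refl y⟩
    push Not at hx
    exact ⟨x, r.symm h1, Or.inr ⟨fun z hz => h3 z (r.trans h1 hz),
      fun z hz => hx z (r.trans h1 hz)⟩⟩

lemma CPred.right_unique {r : Setoid ℕ} {x y z : ℕ} (h : CPred r x y) (h' : CPred r x z) :
    y = z := by
  obtain ⟨a, b⟩ := h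
  obtain ⟨a', b'⟩ := h'
  rcases b with ⟨b, c⟩ | ⟨b, c⟩ <;> rcases b' with ⟨b', c'⟩ | ⟨b', c'⟩
  · have := c z a' b'; have := c' y a b; omega
  · have := b' y a; omega
  · have := b z a'; omega
  · have := c z a'; have := c' y a; omega

lemma CPred.left_unique {r : Setoid ℕ} {x y z : ℕ} (h : CPred r x z) (h' : CPred r y z) :
    x = y := by
  obtain ⟨a, b⟩ := h
  obtain ⟨a', b'⟩ := h'
  have hxy : r x y := r.trans a (r.symm a')
  have hyx := r.symm hxy
  rcases b with ⟨b, c⟩ | ⟨b, c⟩ <;> rcases b' with ⟨b', c'⟩ | ⟨b', c'⟩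
  · have := c y hxy; have := c' x hyx; omega
  · have := c' x hyx; omega
  · have := c y hxy; omega
  · have := b y hxy; have := b' x hyx; omega

lemma dec_min_max {k : ℕ} {π : Equiv.Perm ℕ} (hk : ∀ x : ℕ, x ∉ Finset.Icc 1 k → π x = x)
    (hd : DecCycles π) (w : ℕ) (hw : ∀ z, π.SameCycle w z → w ≤ z) :
    ∀ n x, k - x = n → π.SameCycle w x → x ≤ π w := by
  intro n
  induction n using Nat.strong_induction_on with
  | _ n ih =>
    intro x hn hx
    by_contra hc
    push Not at hc
    have hu : π.SameCycle w (π.symm x) := Equiv.Perm.sameCycle_symm_apply_right.2 hx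
    have h1 : π (π.symm x) = x := by simp
    have h2 : π.symm x ≠ w := by
      intro e; rw [e] at h1; omega
    have h3 : π (π.symm x) ≠ π.symm x := by
      intro e
      have : π.symm x = w := (hu.symm.eq_of_left e)
      exact h2 this
    have h4 := hd (π.symm x) h3 ⟨w, hu.symm, lt_of_le_of_ne (hw _ hu) (Ne.symm h2)⟩
    have h5 : π.symm x ∈ Finset.Icc 1 k := by
      by_contra h; exact h3 (hk _ h)
    rw [h1] at h4
    simp only [Finset.mem_Icc] at h5
    have := ih (k - π.symm x) (by omega) _ rfl hu
    omega

lemma dec_pred {k : ℕ} {π : Equiv.Perm ℕ} (hk : ∀ x : ℕ, x ∉ Finset.Icc 1 k → π x = x)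
    (hd : DecCycles π) :
    ∀ n x, k - x = n → ∀ m y, x - y = m → π.SameCycle x y → y < x → y ≤ π x := by
  intro n
  induction n using Nat.strong_induction_on with
  | _ n ih =>
    intro x hn m
    induction m using Nat.strong_induction_on with
    | _ m ih2 =>
      intro y hm hxy hlt
      by_contra hc
      push Not at hc
      set w := π.symm y with hw
      have h1 : π w = y := by simp [hw]
      have hyw : π.SameCycle y w := Equiv.Perm.sameCycle_symm_apply_right.2 (.refl _ _)
      have hxw : π.SameCycle x w := hxy.trans hyw
      have hxfix : π x ≠ x := by omega
      have hwfix : π w ≠ w := fun e => hxfix ((hxw.apply_eq_self_iff).2 e)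
      have hxI : x ∈ Finset.Icc 1 k := by
        by_contra h; exact hxfix (hk _ h)
      have hwI : w ∈ Finset.Icc 1 k := by
        by_contra h; exact hwfix (hk _ h)
      simp only [Finset.mem_Icc] at hxI hwI
      rcases lt_trichotomy w x with h | h | h
      · rcases lt_trichotomy w y with h' | h' | h'
        · have hmin : ∀ z, π.SameCycle w z → w ≤ z := by
            intro z hz
            by_contra hzw
            have := hd w hwfix ⟨z, hz, by omega⟩
            omega
          have := dec_min_max hk hd w hmin _ x rfl hxw.symm
          omega
        · omega
        · have := ih2 (x - w) (by omega) w rfl hxw h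
          omega
      · rw [h] at h1; omega
      · have := ih (k - w) (by omega) w rfl _ x rfl hxw.symm h
        omega

lemma dec_cpred {k : ℕ} {π : Equiv.Perm ℕ} (hk : ∀ x : ℕ, x ∉ Finset.Icc 1 k → π x = x)
    (hd : DecCycles π) (x : ℕ) : CPred (Equiv.Perm.SameCycle.setoid π) x (π x) := by
  refine ⟨Equiv.Perm.sameCycle_apply_right.2 (.refl _ _), ?_⟩
  by_cases hx : ∃ z, π.SameCycle x z ∧ z < x
  · left
    obtain ⟨z, hz, hzx⟩ := hx
    have : π x ≠ x := by
      intro e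
      have := hz.eq_of_left e
      omega
    exact ⟨hd x this ⟨z, hz, hzx⟩, fun z hz hzx => dec_pred hk hd _ x rfl _ z rfl hz hzx⟩
  · right
    push Not at hx
    exact ⟨hx, fun z hz => dec_min_max hk hd x hx _ z rfl hz⟩

lemma exists_dec_perm {k : ℕ} {r : Setoid ℕ} (h : Dom k r) :
    ∃ π : Equiv.Perm ℕ, (∀ x, CPred r x (π x)) := by
  choose f hf using CPred.exists_right h
  have hb : Function.Bijective f := by
    constructor
    · intro x y e
      exact (hf x).left_unique (e ▸ hf y)
    · intro y
      obtain ⟨x, hx⟩ := CPred.exists_left r y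
      exact ⟨x, (hf x).right_unique hx⟩
  exact ⟨Equiv.ofBijective f hb, hf⟩

lemma cpred_sameCycle {r : Setoid ℕ} {π : Equiv.Perm ℕ} (h : ∀ x, CPred r x (π x)) :
    Equiv.Perm.SameCycle.setoid π = r := by
  have h1 : ∀ x y, r x y → (∀ z, r y z → y ≤ z) → π.SameCycle x y := by
    intro x
    induction x using Nat.strong_induction_on with
    | _ x ih =>
      intro y hxy hy
      obtain ⟨a, ⟨b, c⟩ | ⟨b, c⟩⟩ := h x
      · exact Equiv.Perm.sameCycle_apply_left.1 (ih _ b y (r.trans (r.symm a) hxy) hy)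
      · have : x = y := le_antisymm (b y hxy) (hy x (r.symm hxy))
        exact this ▸ .refl _ _
  have h3 : ∀ (n : ℕ) x, r x ((π ^ n) x) := by
    intro n
    induction n with
    | zero => intro x; exact r.refl x
    | succ n ih =>
      intro x
      rw [pow_succ', Equiv.Perm.mul_apply]
      exact r.trans (ih x) (h _).1
  ext x y
  constructor
  · rintro ⟨i, rfl⟩
    obtain ⟨n, rfl | rfl⟩ := i.eq_nat_or_neg
    · simpa using h3 n x
    · have := h3 n ((π ^ (-(n : ℤ))) x)
      rw [← zpow_natCast, ← Equiv.Perm.mul_apply, ← zpow_add] at this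
      simpa using r.symm (by simpa using this)
  · intro hxy
    obtain ⟨m, hm, hm'⟩ := exists_min_nat (fun z => r x z) ⟨x, r.refl x⟩
    have hmin : ∀ z, r m z → m ≤ z := fun z hz => hm' z (r.trans hm hz)
    exact (h1 x m hm hmin).trans (h1 y m (r.trans (r.symm hxy) hm) hmin).symm

lemma cpred_dec {r : Setoid ℕ} {π : Equiv.Perm ℕ} (h : ∀ x, CPred r x (π x)) :
    DecCycles π := by
  intro x hx ⟨y, hxy, hlt⟩
  have hxy : r x y := by
    rw [← cpred_sameCycle h]; exact hxy
  obtain ⟨a, ⟨b, c⟩ | ⟨b, c⟩⟩ := h x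
  · exact b
  · have := b y hxy; omega

/-! ### Reduction to pairs (label set, equivalence relation) -/

lemma PartialST.ext' {α : YoungDiagram} {k : ℕ} {S T : PartialST α k}
    (h : ∀ c ∈ α, S.label c = T.label c) : S = T := by
  have : S.label = T.label := by
    funext c
    by_cases hc : c ∈ α
    · exact h c hc
    · rw [S.zero_of_not_cell c hc, T.zero_of_not_cell c hc]
  cases S; cases T
  simp only at this
  subst this
  rfl

/-- The set of labels of a partial standard tableau. -/
def PartialST.labels {α : YoungDiagram} {k : ℕ} (T : PartialST α k) : Finset ℕ :=
  α.cells.image T.label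

lemma PartialST.mem_labels {α : YoungDiagram} {k : ℕ} (T : PartialST α k) (x : ℕ) :
    x ∈ T.labels ↔ ∃ c ∈ α, T.label c = x := by
  simp [PartialST.labels]

lemma PartialST.card_labels {α : YoungDiagram} {k : ℕ} (T : PartialST α k) :
    T.labels.card = α.card := by
  unfold PartialST.labels
  rw [Finset.card_image_of_injOn]
  intro c hc c' hc' h
  exact T.injOn c (by simpa using hc) c' (by simpa using hc') h

lemma PartialST.labels_subset {α : YoungDiagram} {k : ℕ} (T : PartialST α k) :
    T.labels ⊆ Finset.Icc 1 k := by
  intro x hx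
  obtain ⟨c, hc, rfl⟩ := (T.mem_labels x).1 hx
  exact T.mem_of_cell c hc

/-- Apply an increasing relabelling to a tableau. -/
noncomputable def PartialST.relabel {α : YoungDiagram} {k k' : ℕ} (T : PartialST α k) (g : ℕ → ℕ)
    (hg : ∀ x ∈ T.labels, g x ∈ Finset.Icc 1 k')
    (hm : ∀ x ∈ T.labels, ∀ y ∈ T.labels, x < y → g x < g y) : PartialST α k' where
  label c := open Classical in if c ∈ α then g (T.label c) else 0
  mem_of_cell c hc := by
    simp only [hc, if_true]
    exact hg _ ((T.mem_labels _).2 ⟨c, hc, rfl⟩)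
  zero_of_not_cell c hc := by simp [hc]
  injOn c hc c' hc' h := by
    simp only [hc, hc', if_true] at h
    have m := (T.mem_labels _).2 ⟨c, hc, rfl⟩
    have m' := (T.mem_labels _).2 ⟨c', hc', rfl⟩
    apply T.injOn c hc c' hc'
    rcases lt_trichotomy (T.label c) (T.label c') with h1 | h1 | h1
    · have := hm _ m _ m' h1; omega
    · exact h1
    · have := hm _ m' _ m h1; omega
  row_incr i j1 j2 hj hc := by
    have hc' : (i, j1) ∈ α := α.up_left_mem le_rfl hj.le hc
    simp only [hc, hc', if_true]
    exact hm _ ((T.mem_labels _).2 ⟨_, hc', rfl⟩) _ ((T.mem_labels _).2 ⟨_, hc, rfl⟩)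
      (T.row_incr i j1 j2 hj hc)
  col_incr i1 i2 j hj hc := by
    have hc' : (i1, j) ∈ α := α.up_left_mem hj.le le_rfl hc
    simp only [hc, hc', if_true]
    exact hm _ ((T.mem_labels _).2 ⟨_, hc', rfl⟩) _ ((T.mem_labels _).2 ⟨_, hc, rfl⟩)
      (T.col_incr i1 i2 j hj hc)

lemma PartialST.relabel_label {α : YoungDiagram} {k k' : ℕ} (T : PartialST α k) (g : ℕ → ℕ)
    (hg : ∀ x ∈ T.labels, g x ∈ Finset.Icc 1 k')
    (hm : ∀ x ∈ T.labels, ∀ y ∈ T.labels, x < y → g x < g y) (c : ℕ × ℕ) (hc : c ∈ α) :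
    (T.relabel g hg hm).label c = g (T.label c) := by
  simp [PartialST.relabel, hc]

lemma nth_bound (L : Finset ℕ) (n : ℕ) (hn : n < L.card) :
    ∀ hf : (Set.ofPred (· ∈ L)).Finite, n < hf.toFinset.card := by
  intro hf
  have : hf.toFinset = L := by ext x; simp
  rwa [this]

/-- Tableaux with prescribed label set. -/
noncomputable def fiberEquiv (α : YoungDiagram) (k : ℕ) (L : Finset ℕ) (hL : L ⊆ Finset.Icc 1 k)
    (hc : L.card = α.card) :
    {T : PartialST α k // T.labels = L} ≃ PartialST α α.card where
  toFun T := T.1.relabel (fun x => Nat.count (· ∈ L) x + 1)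
    (by
      intro x hx
      rw [T.2] at hx
      have : Nat.count (· ∈ L) x < L.card := by
        rw [Nat.count_eq_card_filter_range]
        apply Finset.card_lt_card
        refine ⟨fun y hy => (Finset.mem_filter.1 hy).2, fun h => ?_⟩
        have := h hx
        simp at this
      simp; omega)
    (by
      intro x hx y hy h
      rw [T.2] at hx
      have := Nat.count_strict_mono (p := (· ∈ L)) hx h
      omega)
  invFun T := ⟨T.relabel (fun x => Nat.nth (· ∈ L) (x - 1))
    (by
      intro x hx
      have hx' := T.labels_subset hx
      simp only [Finset.mem_Icc] at hx'
      exact hL (Nat.nth_mem (x - 1) (nth_bound L _ (by omega))))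
    (by
      intro x hx y hy h
      have hx' := T.labels_subset hx
      have hy' := T.labels_subset hy
      simp only [Finset.mem_Icc] at hx' hy'
      exact Nat.nth_lt_nth' (by omega) (nth_bound L _ (by omega))),
    by
      apply Finset.eq_of_subset_of_card_le
      · intro x hx
        obtain ⟨c, hcc, rfl⟩ := (PartialST.mem_labels _ x).1 hx
        rw [PartialST.relabel_label _ _ _ _ _ hcc]
        have hx' := T.mem_of_cell c hcc
        simp only [Finset.mem_Icc] at hx'
        exact Nat.nth_mem _ (nth_bound L _ (by omega))
      · rw [PartialST.card_labels, hc]⟩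
  left_inv T := by
    apply Subtype.ext
    apply PartialST.ext'
    intro c hcc
    rw [PartialST.relabel_label _ _ _ _ _ hcc, PartialST.relabel_label _ _ _ _ _ hcc]
    have : T.1.label c ∈ L :=
      T.2.subset ((PartialST.mem_labels _ _).2 ⟨c, hcc, rfl⟩)
    simpa using Nat.nth_count (p := (· ∈ L)) this
  right_inv T := by
    apply PartialST.ext'
    intro c hcc
    rw [PartialST.relabel_label _ _ _ _ _ hcc, PartialST.relabel_label _ _ _ _ _ hcc]
    have hx' := T.mem_of_cell c hcc
    simp only [Finset.mem_Icc] at hx'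
    rw [Nat.count_nth (nth_bound L _ (by omega))]
    omega

/-- Compatibility of a label set and an equivalence relation. -/
def Compat (k : ℕ) (L : Finset ℕ) (r : Setoid ℕ) : Prop :=
  Dom k r ∧ (∀ x ∈ Finset.Icc 1 k, (∀ y, r x y → y = x) → x ∈ L) ∧
    ∀ x ∈ L, ∀ y, r x y → y ≤ x

/-- From a pair (tableau, permutation) to a pair (tableau, relation). -/
def TabPerm.toRel {k : ℕ} {α : YoungDiagram} (t : TabPerm k α) :
    {q : PartialST α k × Setoid ℕ // Compat k q.1.labels q.2} :=
  ⟨(t.T, Equiv.Perm.SameCycle.setoid t.π), by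
    refine ⟨?_, ?_, ?_⟩
    · intro x y hxy hne
      by_contra h
      exact hne (Equiv.Perm.SameCycle.eq_of_left hxy (t.perm_of x h))
    · intro x hx h
      rw [PartialST.mem_labels]
      exact t.fix_mem x hx (h _ (Equiv.Perm.sameCycle_apply_right.2 (.refl _ _)))
    · intro x hx y hxy
      obtain ⟨c, hc, rfl⟩ := (PartialST.mem_labels _ x).1 hx
      exact t.label_max c hc y hxy⟩

lemma TabPerm.toRel_bijective (k : ℕ) (α : YoungDiagram) :
    Function.Bijective (TabPerm.toRel (k := k) (α := α)) := by
  constructor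
  · intro s t h
    have h' := congrArg Subtype.val h
    simp only [TabPerm.toRel, Prod.mk.injEq] at h'
    obtain ⟨h1, h2⟩ := h'
    have h3 : s.π = t.π := by
      ext x
      have a := dec_cpred s.perm_of s.dec x
      have b := dec_cpred t.perm_of t.dec x
      rw [h2] at a
      exact a.right_unique b
    cases s; cases t
    simp only at h1 h3
    subst h1 h3
    rfl
  · rintro ⟨⟨T, r⟩, h1, h2, h3⟩
    simp only at h1 h2 h3
    obtain ⟨π, hπ⟩ := exists_dec_perm h1
    have hs := cpred_sameCycle hπ
    have hs' : ∀ x y, π.SameCycle x y ↔ r x y := by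
      intro x y; rw [← hs]; rfl
    refine ⟨⟨T, π, ?_, cpred_dec hπ, ?_, ?_⟩, ?_⟩
    · intro x hx
      by_contra h
      exact hx (h1 x _ (hπ x).1 (Ne.symm h))
    · intro x hx h
      rw [← PartialST.mem_labels]
      refine h2 x hx fun y hy => ?_
      exact (((hs' x y).2 hy).eq_of_left h).symm
    · intro c hc y hy
      exact h3 _ ((PartialST.mem_labels _ _).2 ⟨c, hc, rfl⟩) y ((hs' _ _).1 hy)
    · apply Subtype.ext
      simp only [TabPerm.toRel, hs]

/-- Pairs (label set, relation). -/
abbrev LPairs (k ℓ : ℕ) : Type :=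
  {q : Finset ℕ × Setoid ℕ // q.1 ⊆ Finset.Icc 1 k ∧ q.1.card = ℓ ∧ Compat k q.1 q.2}

noncomputable def relEquiv (k : ℕ) (α : YoungDiagram) :
    {q : PartialST α k × Setoid ℕ // Compat k q.1.labels q.2} ≃
      LPairs k α.card × PartialST α α.card :=
  let f : {q : PartialST α k × Setoid ℕ // Compat k q.1.labels q.2} → LPairs k α.card :=
    fun q => ⟨(q.1.1.labels, q.1.2), q.1.1.labels_subset, q.1.1.card_labels, q.2⟩
  (Equiv.sigmaFiberEquiv f).symm.trans <|
    (Equiv.sigmaCongrRight fun p =>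
      (show {x // f x = p} ≃ {T : PartialST α k // T.labels = p.1.1} from
        { toFun := fun x => ⟨x.1.1.1, congrArg (fun p => p.1.1) x.2⟩
          invFun := fun T => ⟨⟨(T.1, p.1.2), by rw [T.2]; exact p.2.2.2⟩, by
            apply Subtype.ext
            apply Prod.ext
            · exact T.2
            · rfl⟩
          left_inv := fun x => by
            obtain ⟨x, rfl⟩ := x
            rfl
          right_inv := fun T => rfl }).trans
        (fiberEquiv α k p.1.1 p.2.1 p.2.2.1)).trans (Equiv.sigmaEquivProd _ _)

lemma card_tabPerm (k : ℕ) (α : YoungDiagram) :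
    Nat.card (TabPerm k α) = fSYT α * Nat.card (LPairs k α.card) := by
  rw [Nat.card_eq_of_bijective _ (TabPerm.toRel_bijective k α), Nat.card_congr (relEquiv k α),
    Nat.card_prod, mul_comm, fSYT]

/-! ### Counting relations -/

/-- The support of `r` (union of its non-trivial classes) is `A`. -/
def Supp (A : Finset ℕ) (r : Setoid ℕ) : Prop := ∀ x, x ∈ A ↔ ∃ y, y ≠ x ∧ r x y

open Classical in
/-- Greatest elements of classes within `A`. -/
noncomputable def maxes (A : Finset ℕ) (r : Setoid ℕ) : Finset ℕ :=
  A.filter fun x => ∀ y, r x y → y ≤ x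

open Classical in
lemma parts_card_eq {n : ℕ} (A : Finset ℕ) (e : Fin n ≃ A) (r : Setoid ℕ) (hr : Supp A r) :
    (Finpartition.ofSetoid (r.comap (fun i => (e i : ℕ)))).parts.card = (maxes A r).card := by
  symm
  set P := Finpartition.ofSetoid (r.comap (fun i => (e i : ℕ))) with hP
  have hrel : ∀ i j, j ∈ P.part i ↔ r (e i) (e j) := fun i j =>
    Finpartition.mem_part_ofSetoid_iff_rel
  refine Finset.card_bij (fun x hx => P.part (e.symm ⟨x, (Finset.mem_filter.1 hx).1⟩)) ?_ ?_ ?_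
  · intro x hx
    simp
  · intro x hx y hy h
    have h1 : e.symm ⟨y, (Finset.mem_filter.1 hy).1⟩ ∈
        P.part (e.symm ⟨x, (Finset.mem_filter.1 hx).1⟩) := by
      rw [h]; simp
    rw [hrel] at h1
    simp only [Equiv.apply_symm_apply] at h1
    exact le_antisymm ((Finset.mem_filter.1 hy).2 x (r.symm h1))
      ((Finset.mem_filter.1 hx).2 y h1)
  · intro b hb
    obtain ⟨i, hi⟩ := P.nonempty_of_mem_parts hb
    have hbi : P.part i = b := P.part_eq_of_mem hb hi
    obtain ⟨x, hx, hmax⟩ := exists_max_of_bdd (fun z => r (e i) z) (A.sup id) (by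
      intro z hz
      have hzA : z ∈ A := by
        by_cases h : z = e i
        · rw [h]; exact (e i).2
        · exact (hr z).2 ⟨e i, Ne.symm h, r.symm hz⟩
      exact Finset.le_sup (f := id) hzA) ⟨e i, r.refl _⟩
    have hxA : x ∈ A := by
      by_cases h : x = e i
      · rw [h]; exact (e i).2
      · exact (hr x).2 ⟨e i, Ne.symm h, r.symm hx⟩
    refine ⟨x, Finset.mem_filter.2 ⟨hxA, fun y hy => hmax y (r.trans hx hy)⟩, ?_⟩
    apply P.part_eq_of_mem hb
    rw [← hbi, hrel]
    simpa using hx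

open Classical in
lemma card_supp (n m : ℕ) (A : Finset ℕ) (hA : A.card = n) :
    Nat.card {r : Setoid ℕ // Supp A r ∧ (maxes A r).card = m} = p2 n m := by
  have e : Fin n ≃ A := (A.equivFinOfCardEq hA).symm
  unfold p2
  refine Nat.card_eq_of_bijective (fun r =>
    ⟨Finpartition.ofSetoid (r.1.comap (fun i => (e i : ℕ))), ?_, ?_⟩) ⟨?_, ?_⟩
  · rw [parts_card_eq A e r.1 r.2.1, r.2.2]
  · intro b hb
    obtain ⟨r, hr, hm⟩ := r
    obtain ⟨i, hi⟩ := Finpartition.nonempty_of_mem_parts _ hb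
    have hbi := Finpartition.part_eq_of_mem _ hb hi
    obtain ⟨y, hy, hxy⟩ := (hr (e i)).1 (e i).2
    have hyA : y ∈ A := (hr y).2 ⟨e i, Ne.symm hy, r.symm hxy⟩
    have hj : e.symm ⟨y, hyA⟩ ∈ b := by
      rw [← hbi, Finpartition.mem_part_ofSetoid_iff_rel]
      simpa [Setoid.comap_rel] using hxy
    have : 1 < b.card := Finset.one_lt_card.2 ⟨i, hi, _, hj, by
      intro h
      apply hy
      rw [h]; simp⟩
    exact this
  · rintro ⟨r, hr, hm⟩ ⟨s, hs, hm'⟩ h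
    have h' := congrArg Subtype.val h
    simp only at h'
    have key : ∀ i j, r (e i) (e j) ↔ s (e i) (e j) := by
      intro i j
      have h1 := Finpartition.mem_part_ofSetoid_iff_rel (s := r.comap (fun i => (e i : ℕ)))
        (a := i) (b := j)
      have h2 := Finpartition.mem_part_ofSetoid_iff_rel (s := s.comap (fun i => (e i : ℕ)))
        (a := i) (b := j)
      rw [h'] at h1
      exact h1.symm.trans h2
    apply Subtype.ext
    have key' : ∀ x ∈ A, ∀ y ∈ A, r x y ↔ s x y := by
      intro x hx y hy
      simpa using key (e.symm ⟨x, hx⟩) (e.symm ⟨y, hy⟩)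
    ext x y
    by_cases hxy : x = y
    · subst hxy; exact ⟨fun _ => s.refl x, fun _ => r.refl x⟩
    · constructor
      · intro h
        exact (key' x ((hr x).2 ⟨y, Ne.symm hxy, h⟩) y ((hr y).2 ⟨x, hxy, r.symm h⟩)).1 h
      · intro h
        exact (key' x ((hs x).2 ⟨y, Ne.symm hxy, h⟩) y ((hs y).2 ⟨x, hxy, s.symm h⟩)).2 h
  · rintro ⟨P, hP, hP2⟩
    let r : Setoid ℕ :=
      { r := fun x y => x = y ∨ ∃ (hx : x ∈ A) (hy : y ∈ A),
          P.part (e.symm ⟨x, hx⟩) = P.part (e.symm ⟨y, hy⟩)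
        iseqv := ⟨fun x => Or.inl rfl, by
          rintro x y (h | ⟨hx, hy, h⟩)
          · exact Or.inl h.symm
          · exact Or.inr ⟨hy, hx, h.symm⟩, by
          rintro x y z (rfl | ⟨hx, hy, h⟩) (rfl | ⟨hy', hz, h'⟩)
          · exact Or.inl rfl
          · exact Or.inr ⟨hy', hz, h'⟩
          · exact Or.inr ⟨hx, hy, h⟩
          · exact Or.inr ⟨hx, hz, h.trans h'⟩⟩ }
    have hrdef : ∀ x y, r x y ↔ (x = y ∨ ∃ (hx : x ∈ A) (hy : y ∈ A),
          P.part (e.symm ⟨x, hx⟩) = P.part (e.symm ⟨y, hy⟩)) := fun x y => Iff.rfl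
    have hre : ∀ i j, r (e i) (e j) ↔ P.part i = P.part j := by
      intro i j
      rw [hrdef]
      constructor
      · rintro (h | ⟨hx, hy, h⟩)
        · have := e.injective (Subtype.ext h)
          rw [this]
        · simpa using h
      · intro h
        exact Or.inr ⟨(e i).2, (e j).2, by simpa using h⟩
    have hsupp : Supp A r := by
      intro x
      constructor
      · intro hx
        obtain ⟨i, hi⟩ : ∃ i, e i = ⟨x, hx⟩ := ⟨e.symm ⟨x, hx⟩, by simp⟩
        have hx' : x = e i := by rw [hi]
        have h1 : 1 < (P.part i).card := hP2 _ (by simp)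
        obtain ⟨j, hj, hne⟩ := Finset.exists_mem_ne h1 i
        refine ⟨e j, ?_, ?_⟩
        · rw [hx']
          intro h
          exact hne (e.injective (Subtype.ext h))
        · rw [hx', hre]
          exact ((P.mem_part_iff_part_eq_part (by simp) (by simp)).1 hj).symm
      · rintro ⟨y, hy, h | ⟨hx, -, -⟩⟩
        · exact absurd h.symm hy
        · exact hx
    have hPr : Finpartition.ofSetoid (r.comap (fun i => (e i : ℕ))) = P := by
      have hpart : ∀ i, (Finpartition.ofSetoid (r.comap (fun i => (e i : ℕ)))).part i
          = P.part i := by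
        intro i
        ext j
        rw [Finpartition.mem_part_ofSetoid_iff_rel, P.mem_part_iff_part_eq_part (by simp) (by simp)]
        exact (hre i j).trans eq_comm
      ext b
      constructor
      · intro hb
        obtain ⟨i, hi⟩ := Finpartition.nonempty_of_mem_parts _ hb
        rw [← Finpartition.part_eq_of_mem _ hb hi, hpart]
        simp
      · intro hb
        obtain ⟨i, hi⟩ := Finpartition.nonempty_of_mem_parts _ hb
        rw [← Finpartition.part_eq_of_mem _ hb hi, ← hpart]
        simp
    refine ⟨⟨r, hsupp, ?_⟩, ?_⟩
    · rw [← parts_card_eq A e r hsupp, hPr, hP]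
    · apply Subtype.ext
      exact hPr

lemma p2_eq_zero (n m : ℕ) (h : n < 2 * m) : p2 n m = 0 := by
  unfold p2
  have : IsEmpty {P : Finpartition (Finset.univ : Finset (Fin n)) //
    P.parts.card = m ∧ ∀ b ∈ P.parts, 2 ≤ b.card} := by
    constructor
    rintro ⟨P, h1, h2⟩
    have h3 := P.sum_card_parts
    have h4 := Finset.card_nsmul_le_sum P.parts (fun b => b.card) 2 h2
    simp at h3 h4
    rw [h1] at h4
    omega
  exact Nat.card_of_isEmpty

/-! ### Counting pairs -/

lemma card_between (S M : Finset ℕ) (hd : Disjoint S M) (ℓ : ℕ) :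
    (((S ∪ M).powersetCard ℓ).filter (S ⊆ ·)).card =
      if S.card ≤ ℓ then M.card.choose (ℓ - S.card) else 0 := by
  split_ifs with h
  · rw [← Finset.card_powersetCard]
    symm
    refine Finset.card_nbij' (fun B => S ∪ B) (fun L => L \ S) ?_ ?_ ?_ ?_
    · intro B hB
      simp only [Finset.mem_coe, Finset.mem_powersetCard, Finset.mem_filter] at hB ⊢
      refine ⟨⟨Finset.union_subset_union_right hB.1, ?_⟩, Finset.subset_union_left⟩
      rw [Finset.card_union_of_disjoint (hd.mono_right hB.1)]
      omega
    · intro L hL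
      simp only [Finset.mem_coe, Finset.mem_powersetCard, Finset.mem_filter] at hL ⊢
      refine ⟨?_, ?_⟩
      · intro x hx
        rw [Finset.mem_sdiff] at hx
        exact (Finset.mem_union.1 (hL.1.1 hx.1)).resolve_left hx.2
      · rw [Finset.card_sdiff_of_subset hL.2, hL.1.2]
    · intro B hB
      simp only [Finset.mem_coe, Finset.mem_powersetCard] at hB
      exact Finset.union_sdiff_cancel_left (hd.mono_right hB.1)
    · intro L hL
      simp only [Finset.mem_coe, Finset.mem_powersetCard, Finset.mem_filter] at hL
      exact Finset.union_sdiff_of_subset hL.2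
  · rw [Finset.card_eq_zero, Finset.filter_eq_empty_iff]
    intro L hL hS
    have := Finset.card_le_card hS
    rw [Finset.mem_powersetCard] at hL
    omega

open Classical in
/-- Singleton classes in `{1, …, k}`. -/
noncomputable def singles (k : ℕ) (r : Setoid ℕ) : Finset ℕ :=
  (Finset.Icc 1 k).filter fun x => ∀ y, r x y → y = x

open Classical in
lemma dom_finite (k : ℕ) : {r : Setoid ℕ | Dom k r}.Finite := by
  refine Set.Finite.of_injOn (f := fun r : Setoid ℕ =>
    (Finset.Icc 1 k ×ˢ Finset.Icc 1 k).filter fun p => r p.1 p.2)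
    (t := ((Finset.Icc 1 k ×ˢ Finset.Icc 1 k).powerset : Finset (Finset (ℕ × ℕ)))) ?_ ?_
    (Finset.finite_toSet _)
  · intro r _
    simp only [Finset.coe_powerset]
    intro p hp
    exact Finset.mem_coe.2 (Finset.mem_filter.1 hp).1
  · intro r hr s hs h
    simp only at h
    have hr : Dom k r := hr
    have hs : Dom k s := hs
    have key : ∀ x ∈ Finset.Icc 1 k, ∀ y ∈ Finset.Icc 1 k, r x y ↔ s x y := by
      intro x hx y hy
      have := Finset.ext_iff.1 h (x, y)
      simp only [Finset.mem_filter, Finset.mem_product, hx, hy, true_and] at this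
      exact this
    ext x y
    by_cases hxy : x = y
    · subst hxy; exact ⟨fun _ => s.refl x, fun _ => r.refl x⟩
    · constructor
      · intro h
        exact (key x (hr x y h hxy) y (hr y x (r.symm h) (Ne.symm hxy))).1 h
      · intro h
        exact (key x (hs x y h hxy) y (hs y x (s.symm h) (Ne.symm hxy))).2 h

/-- The finite set of relations living on `{1, …, k}`. -/
noncomputable def doms (k : ℕ) : Finset (Setoid ℕ) := (dom_finite k).toFinset

lemma mem_doms (k : ℕ) (r : Setoid ℕ) : r ∈ doms k ↔ Dom k r := by simp [doms]

lemma supp_iff (k : ℕ) (S : Finset ℕ) (hS : S ⊆ Finset.Icc 1 k) (r : Setoid ℕ) :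
    (Dom k r ∧ singles k r = S) ↔ Supp (Finset.Icc 1 k \ S) r := by
  constructor
  · rintro ⟨hd, rfl⟩ x
    simp only [singles, Finset.mem_sdiff, Finset.mem_filter, not_and]
    constructor
    · rintro ⟨h1, h2⟩
      have := h2 h1
      push Not at this
      obtain ⟨y, hy, hne⟩ := this
      exact ⟨y, hne, hy⟩
    · rintro ⟨y, hne, hy⟩
      exact ⟨hd x y hy (Ne.symm hne), fun _ h => hne (h y hy)⟩
  · intro h
    refine ⟨?_, ?_⟩
    · intro x y hxy hne
      exact (Finset.mem_sdiff.1 ((h x).2 ⟨y, Ne.symm hne, hxy⟩)).1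
    · ext x
      simp only [singles, Finset.mem_filter]
      have := h x
      rw [Finset.mem_sdiff] at this
      constructor
      · rintro ⟨h1, h2⟩
        by_contra hx
        obtain ⟨y, hne, hy⟩ := this.1 ⟨h1, hx⟩
        exact hne (h2 y hy)
      · intro hx
        refine ⟨hS hx, fun y hy => ?_⟩
        by_contra hne
        exact (this.2 ⟨y, hne, hy⟩).2 hx

/-- Greatest elements of nontrivial classes. -/
noncomputable def bigs (k : ℕ) (r : Setoid ℕ) : Finset ℕ :=
  maxes (Finset.Icc 1 k \ singles k r) r

open Classical in
lemma card_doms_fiber (k m : ℕ) (S : Finset ℕ) (hS : S ⊆ Finset.Icc 1 k) :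
    ((doms k).filter fun r => singles k r = S ∧ (bigs k r).card = m).card =
      p2 (k - S.card) m := by
  rw [← card_supp (k - S.card) m (Finset.Icc 1 k \ S)
    (by rw [Finset.card_sdiff_of_subset hS]; simp)]
  symm
  apply Nat.subtype_card
  intro r
  rw [Finset.mem_filter, mem_doms, ← supp_iff k S hS, and_assoc]
  constructor
  · rintro ⟨h1, h2, h3⟩
    refine ⟨h1, h2, ?_⟩
    rw [bigs, h2] at h3
    exact h3
  · rintro ⟨h1, h2, h3⟩
    refine ⟨h1, h2, ?_⟩
    rw [bigs, h2]
    exact h3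

lemma compat_iff (k : ℕ) (L : Finset ℕ) (r : Setoid ℕ) :
    (L ⊆ Finset.Icc 1 k ∧ Compat k L r) ↔
      (Dom k r ∧ singles k r ⊆ L ∧ L ⊆ singles k r ∪ bigs k r) := by
  constructor
  · rintro ⟨h0, h1, h2, h3⟩
    refine ⟨h1, ?_, ?_⟩
    · intro x hx
      simp only [singles, Finset.mem_filter] at hx
      exact h2 x hx.1 hx.2
    · intro x hx
      by_cases hs : x ∈ singles k r
      · exact Finset.mem_union_left _ hs
      · apply Finset.mem_union_right
        simp only [bigs, maxes, Finset.mem_filter, Finset.mem_sdiff]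
        exact ⟨⟨h0 hx, hs⟩, h3 x hx⟩
  · rintro ⟨h1, h2, h3⟩
    refine ⟨?_, h1, ?_, ?_⟩
    · intro x hx
      have := h3 hx
      simp only [bigs, maxes, singles, Finset.mem_union, Finset.mem_filter, Finset.mem_sdiff]
        at this
      tauto
    · intro x hx h
      exact h2 (by simp only [singles, Finset.mem_filter]; exact ⟨hx, h⟩)
    · intro x hx y hy
      rcases Finset.mem_union.1 (h3 hx) with h | h
      · simp only [singles, Finset.mem_filter] at h
        exact (h.2 y hy).le
      · simp only [bigs, maxes, Finset.mem_filter] at h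
        exact h.2 y hy

lemma singles_disj (k : ℕ) (r : Setoid ℕ) : Disjoint (singles k r) (bigs k r) := by
  rw [Finset.disjoint_left]
  intro x hx h
  simp only [bigs, maxes, Finset.mem_filter, Finset.mem_sdiff] at h
  exact h.1.2 hx

open Classical in
lemma card_lpairs (k ℓ : ℕ) :
    Nat.card (LPairs k ℓ) = ∑ r ∈ doms k,
      if (singles k r).card ≤ ℓ then (bigs k r).card.choose (ℓ - (singles k r).card) else 0 := by
  have e : LPairs k ℓ ≃ Σ r : doms k,
      ((((singles k r) ∪ (bigs k r)).powersetCard ℓ).filter ((singles k r) ⊆ ·) :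
        Finset (Finset ℕ)) :=
    { toFun := fun q => ⟨⟨q.1.2, (mem_doms k _).2 q.2.2.2.1⟩, ⟨q.1.1, by
        have := (compat_iff k q.1.1 q.1.2).1 ⟨q.2.1, q.2.2.2⟩
        rw [Finset.mem_filter, Finset.mem_powersetCard]
        exact ⟨⟨this.2.2, q.2.2.1⟩, this.2.1⟩⟩⟩
      invFun := fun p => ⟨(p.2.1, p.1.1), by
        have h := p.2.2
        rw [Finset.mem_filter, Finset.mem_powersetCard] at h
        have := (compat_iff k p.2.1 p.1.1).2 ⟨(mem_doms k _).1 p.1.2, h.2, h.1.1⟩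
        exact ⟨this.1, h.1.2, this.2⟩⟩
      left_inv := fun q => rfl
      right_inv := fun p => rfl }
  rw [Nat.card_congr e, Nat.card_sigma, ← Finset.sum_coe_sort (doms k)]
  apply Finset.sum_congr rfl
  intro r _
  rw [← card_between _ _ (singles_disj k r)]
  exact Nat.subtype_card _ (fun x => by simp)

open Classical in
lemma sum_doms (k : ℕ) (h : ℕ → ℕ → ℕ) :
    ∑ r ∈ doms k, h (singles k r).card (bigs k r).card =
      ∑ i ∈ Finset.range (k + 1), k.choose i *
        ∑ m ∈ Finset.range (k + 1), h i m * p2 (k - i) m := by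
  have h1 : ∀ r ∈ doms k, (singles k r, (bigs k r).card) ∈
      (Finset.Icc 1 k).powerset ×ˢ Finset.range (k + 1) := by
    intro r _
    rw [Finset.mem_product, Finset.mem_powerset, Finset.mem_range]
    refine ⟨Finset.filter_subset _ _, ?_⟩
    have : (bigs k r).card ≤ (Finset.Icc 1 k).card :=
      Finset.card_le_card ((Finset.filter_subset _ _).trans Finset.sdiff_subset)
    simp at this ⊢
    omega
  rw [← Finset.sum_fiberwise_of_maps_to h1, Finset.sum_product]
  have h2 : ∀ S ∈ (Finset.Icc 1 k).powerset,
      (∑ m ∈ Finset.range (k + 1), ∑ r ∈ doms k with (singles k r, (bigs k r).card) = (S, m),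
        h (singles k r).card (bigs k r).card) =
      (fun i => ∑ m ∈ Finset.range (k + 1), h i m * p2 (k - i) m) S.card := by
    intro S hS
    apply Finset.sum_congr rfl
    intro m _
    rw [Finset.sum_congr rfl (g := fun _ => h S.card m)]
    · simp only [Prod.mk.injEq, Finset.sum_const, smul_eq_mul]
      rw [card_doms_fiber k m S (Finset.mem_powerset.1 hS), mul_comm]
    · intro r hr
      have := (Finset.mem_filter.1 hr).2
      simp only [Prod.mk.injEq] at this
      rw [this.1, this.2]
  rw [Finset.sum_congr rfl h2, Finset.sum_powerset_apply_card
    (fun i => ∑ m ∈ Finset.range (k + 1), h i m * p2 (k - i) m)]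
  simp

lemma card_lpairs' (k ℓ : ℕ) :
    Nat.card (LPairs k ℓ) = ∑ m₁ ∈ Finset.range (ℓ + 1), k.choose m₁ *
          ∑ m₂ ∈ Finset.Icc (ℓ - m₁) ((k - m₁) / 2),
            m₂.choose (ℓ - m₁) * p2 (k - m₁) m₂ := by
  rw [card_lpairs, sum_doms k (fun s b => if s ≤ ℓ then b.choose (ℓ - s) else 0)]
  have inner : ∀ i, i ≤ ℓ → ∑ m ∈ Finset.range (k + 1),
      (if i ≤ ℓ then m.choose (ℓ - i) else 0) * p2 (k - i) m =
      ∑ m₂ ∈ Finset.Icc (ℓ - i) ((k - i) / 2), m₂.choose (ℓ - i) * p2 (k - i) m₂ := by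
    intro i hi
    simp only [hi, if_true]
    symm
    apply Finset.sum_subset
    · intro m hm
      simp only [Finset.mem_Icc, Finset.mem_range] at hm ⊢
      omega
    · intro m _ hm
      simp only [Finset.mem_Icc, not_and_or, not_le] at hm
      rcases hm with hm | hm
      · rw [Nat.choose_eq_zero_of_lt hm, zero_mul]
      · rw [p2_eq_zero _ _ (by omega), mul_zero]
  have e1 : ∑ i ∈ Finset.range (k + 1), k.choose i * ∑ m ∈ Finset.range (k + 1),
      (if i ≤ ℓ then m.choose (ℓ - i) else 0) * p2 (k - i) m =
    ∑ i ∈ Finset.range (max k ℓ + 1), k.choose i * ∑ m ∈ Finset.range (k + 1),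
      (if i ≤ ℓ then m.choose (ℓ - i) else 0) * p2 (k - i) m := by
    apply Finset.sum_subset
    · intro i hi
      simp only [Finset.mem_range] at hi ⊢
      omega
    · intro i _ hi
      simp only [Finset.mem_range, not_lt] at hi
      rw [Nat.choose_eq_zero_of_lt (by omega), zero_mul]
  rw [e1]
  symm
  rw [Finset.sum_congr rfl (fun i hi => by
    rw [← inner i (by simp only [Finset.mem_range] at hi; omega)])]
  apply Finset.sum_subset
  · intro i hi
    simp only [Finset.mem_range] at hi ⊢
    omega
  · intro i _ hi
    simp only [Finset.mem_range, not_lt] at hi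
    have : ¬ i ≤ ℓ := by omega
    simp [this]

/-- The number of pairs `(T, π)` of a partial standard tableau of shape `α ⊢ ℓ` with labels
in `{1, …, k}` and a permutation of `{1, …, k}` with all non-trivial cycles decreasing,
every fixed point of `π` a label of `T` and every label of `T` the greatest element of its
cycle in `π`, equals
`f^{α} ⬝ Σ_{m₁=0}^{ℓ} C(k, m₁) Σ_{m₂=ℓ-m₁}^{⌊(k-m₁)/2⌋} C(m₂, ℓ-m₁) p₂(k-m₁, m₂)`. -/
theorem statement4 (k ℓ : ℕ) (hk : 1 ≤ k) (α : YoungDiagram) (hα : α.card = ℓ) :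
    Nat.card (TabPerm k α) =
      fSYT α *
        ∑ m₁ ∈ Finset.range (ℓ + 1), k.choose m₁ *
          ∑ m₂ ∈ Finset.Icc (ℓ - m₁) ((k - m₁) / 2),
            m₂.choose (ℓ - m₁) * p2 (k - m₁) m₂ := by
  subst hα
  rw [card_tabPerm, card_lpairs']


end KroneckerPaper
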